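/- Let q : [0,∞) → [1,∞) be a function with q(r) → ∞ as r → ∞ and let d > 0. Let (k_l)_{l∈ℕ} be an increasing sequence of positive integers such that, for some c > 1 and δ > 0, q(r) ≥ l^c for all r ∈ [(1−δ)k_l, (1+δ)k_l] and all l ∈ ℕ. Then, with K := [−id, id], there exists a function f ∈ Exp(K) such that sup_{x∈ℝ} |f(x)|/q(|x|) < ∞ and f is frequently universal for the sequence (T₁^{k_l})_{l∈ℕ} on Exp(K), i.e., for every g ∈ Exp(K), every n ∈ ℕ and every ε > 0 the set {l ∈ ℕ : ‖f(·+k_l) − g‖_{K,n} < ε} has positive lower density. -/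

import Mathlib

open Filter Complex

/-- Support function `H_K(z) = sup { Re (z·u) : u ∈ K }` of a set `K ⊆ ℂ`. -/
noncomputable def suppFn (K : Set ℂ) (z : ℂ) : ℝ :=
  sSup ((fun u => (z * u).re) '' K)

/-- The norm `‖f‖_{K,n} = sup_z |f z| · exp (−H_K z − |z|/n)`. -/
noncomputable def expNorm (K : Set ℂ) (n : ℕ) (f : ℂ → ℂ) : ℝ :=
  sSup (Set.range fun z : ℂ => ‖f z‖ * Real.exp (-(suppFn K z) - ‖z‖ / n))

/-- Membership in `Exp(K)`: `f` is entire and all the norms `‖f‖_{K,n}` are finite. -/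
def MemExp (K : Set ℂ) (f : ℂ → ℂ) : Prop :=
  Differentiable ℂ f ∧ ∀ n : ℕ, 0 < n →
    BddAbove (Set.range fun z : ℂ => ‖f z‖ * Real.exp (-(suppFn K z) - ‖z‖ / n))

open scoped Classical in
/-- Lower density of a set of natural numbers. -/
noncomputable def lowerDensity (A : Set ℕ) : ℝ :=
  liminf (fun N : ℕ =>
    (((Finset.range (N + 1)).filter (fun n => n ∈ A)).card : ℝ) / N) atTop

/-- Lower density of a discrete subset of `ℂ`. -/
noncomputable def ldensC (Λ : Set ℂ) : ℝ :=
  liminf (fun r : ℝ => (Nat.card {z : ℂ // z ∈ Λ ∧ ‖z‖ ≤ r} : ℝ) / r) atTop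

/-- `f` is hypercyclic for the translation `T₁` on `Exp(K)`. -/
def HCExp (K : Set ℂ) (f : ℂ → ℂ) : Prop :=
  MemExp K f ∧ ∀ g : ℂ → ℂ, MemExp K g → ∀ n : ℕ, 0 < n → ∀ ε > (0 : ℝ),
    ∃ k : ℕ, expNorm K n (fun z => f (z + (k : ℂ)) - g z) < ε

/-- `f` is frequently hypercyclic for the translation `T₁` on `Exp(K)`. -/
def FHCExp (K : Set ℂ) (f : ℂ → ℂ) : Prop :=
  MemExp K f ∧ ∀ g : ℂ → ℂ, MemExp K g → ∀ n : ℕ, 0 < n → ∀ ε > (0 : ℝ),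
    0 < lowerDensity {k : ℕ | expNorm K n (fun z => f (z + (k : ℂ)) - g z) < ε}

/-- `f` is hypercyclic (Birkhoff-universal) for `T₁` on `H(ℂ)`. -/
def HCEnt (f : ℂ → ℂ) : Prop :=
  Differentiable ℂ f ∧ ∀ g : ℂ → ℂ, Differentiable ℂ g → ∀ R > (0 : ℝ), ∀ ε > (0 : ℝ),
    ∃ k : ℕ, ∀ z : ℂ, ‖z‖ ≤ R → ‖f (z + (k : ℂ)) - g z‖ < ε

/-- `f` is frequently hypercyclic (frequently Birkhoff-universal) for `T₁` on `H(ℂ)`. -/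
def FHCEnt (f : ℂ → ℂ) : Prop :=
  Differentiable ℂ f ∧ ∀ g : ℂ → ℂ, Differentiable ℂ g → ∀ R > (0 : ℝ), ∀ ε > (0 : ℝ),
    0 < lowerDensity {k : ℕ | ∀ z : ℂ, ‖z‖ ≤ R → ‖f (z + (k : ℂ)) - g z‖ < ε}

/-- `f` is an entire function of (finite) exponential type. -/
def ExpType (f : ℂ → ℂ) : Prop :=
  Differentiable ℂ f ∧ ∃ C τ : ℝ, ∀ z : ℂ, ‖f z‖ ≤ C * Real.exp (τ * ‖z‖)

/-- The indicator function `h_f(θ) = limsup_{r→∞} log |f(r e^{iθ})| / r`. -/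
noncomputable def indicatorFn (f : ℂ → ℂ) (θ : ℝ) : ℝ :=
  limsup (fun r : ℝ => Real.log ‖f ((r : ℂ) * Complex.exp (θ * Complex.I))‖ / r) atTop

/-
Multiplying polynomials by powers of `sin (η z) / (η z)` yields a countable dense family of
functions in `Exp(K)` that decay like `|z|⁻⁴` on the real axis, and `f` is a sum of translates
`h_m (· - κ_m)` of such functions, with the centres `κ_m` chosen among the `k_l`. Polynomials are
dense in `Exp(K)` because the dilations `s ↦ g (s ·)`, `0 ≤ s ≤ 1`, form an analytic curve in the
weighted sup space whose Taylor coefficients at `s = 0` are multiples of monomials: the curve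
starts in their closed span, hence stays there up to `s = 1`.

Assigning to the `m`-th centre the function numbered by the ruler sequence `ν₂ (m + 1)` makes each
function recur with positive density, although the `m`-th centre keeps a distance at least
`ν₂ (m + 1)` from all others. A function is admitted at number `v` only if its decay constant is
dominated by `q` on `[v, ∞)`: this gives `f = O(q)` on the real axis, while the decay makes the
interference of the other translates at the `m`-th centre small as `ν₂ (m + 1) → ∞`.
-/

section SupportFunction

variable {K : Set ℂ} {f : ℂ → ℂ} {C : ℝ} {n : ℕ} {z : ℂ}

lemma bddAbove_re_mul_image (hK : Bornology.IsBounded K) (z : ℂ) :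
    BddAbove ((fun u => (z * u).re) '' K) := by
  obtain ⟨R, hR⟩ := hK.exists_norm_le
  refine ⟨‖z‖ * R, ?_⟩
  rintro _ ⟨u, hu, rfl⟩
  calc (z * u).re ≤ ‖z * u‖ := re_le_norm _
    _ = ‖z‖ * ‖u‖ := norm_mul z u
    _ ≤ ‖z‖ * R := by gcongr; exact hR u hu

lemma suppFn_nonneg (hK : Bornology.IsBounded K) (h0 : 0 ∈ K) (z : ℂ) : 0 ≤ suppFn K z :=
  le_csSup (bddAbove_re_mul_image hK z) ⟨0, h0, by simp⟩

lemma suppFn_add_le (hK : Bornology.IsBounded K) (hne : K.Nonempty) (z w : ℂ) :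
    suppFn K (z + w) ≤ suppFn K z + suppFn K w := by
  refine csSup_le (hne.image _) ?_
  rintro _ ⟨u, hu, rfl⟩
  simp only [add_mul, add_re]
  exact add_le_add (le_csSup (bddAbove_re_mul_image hK z) ⟨u, hu, rfl⟩)
    (le_csSup (bddAbove_re_mul_image hK w) ⟨u, hu, rfl⟩)

lemma suppFn_ofReal_mul_le (hK : Bornology.IsBounded K) (h0 : 0 ∈ K) {s : ℝ}
    (hs : s ∈ Set.Icc (0 : ℝ) 1) (z : ℂ) : suppFn K (s * z) ≤ suppFn K z := by
  refine csSup_le (Set.Nonempty.image _ ⟨0, h0⟩) ?_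
  rintro _ ⟨u, hu, rfl⟩
  have hu' : (z * u).re ≤ suppFn K z := le_csSup (bddAbove_re_mul_image hK z) ⟨u, hu, rfl⟩
  simp only [mul_assoc, re_ofReal_mul]
  nlinarith [hs.1, hs.2, suppFn_nonneg hK h0 z]

lemma exists_suppFn_le_mul_norm (hK : Bornology.IsBounded K) (hne : K.Nonempty) :
    ∃ R > 0, ∀ z, suppFn K z ≤ R * ‖z‖ := by
  obtain ⟨R, hR0, hR⟩ := hK.exists_pos_norm_le
  refine ⟨R, hR0, fun z => csSup_le (hne.image _) ?_⟩
  rintro _ ⟨u, hu, rfl⟩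
  calc (z * u).re ≤ ‖z * u‖ := re_le_norm _
    _ = ‖u‖ * ‖z‖ := by rw [norm_mul, mul_comm]
    _ ≤ R * ‖z‖ := by gcongr; exact hR u hu

lemma continuous_suppFn (hK : Bornology.IsBounded K) (hne : K.Nonempty) :
    Continuous (suppFn K) := by
  obtain ⟨R, _hR0, hR⟩ := exists_suppFn_le_mul_norm hK hne
  refine (LipschitzWith.of_le_add_mul' R fun z w => ?_).continuous
  calc suppFn K z = suppFn K (w + (z - w)) := by rw [add_sub_cancel]
    _ ≤ suppFn K w + suppFn K (z - w) := suppFn_add_le hK hne _ _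
    _ ≤ suppFn K w + R * dist z w := by rw [dist_eq]; gcongr; exact hR _

lemma suppFn_segment {d : ℝ} (hd : 0 ≤ d) (z : ℂ) :
    suppFn (segment ℝ (-(d : ℂ) * I) ((d : ℂ) * I)) z = d * |z.im| := by
  refine IsGreatest.csSup_eq ⟨?_, ?_⟩
  · rcases abs_cases z.im with ⟨h, -⟩ | ⟨h, -⟩
    · exact ⟨_, left_mem_segment _ _ _, by simp [h, mul_comm]⟩
    · exact ⟨_, right_mem_segment _ _ _, by simp [h, mul_comm]⟩
  · rintro _ ⟨_, ⟨s, t, hs, ht, hst, rfl⟩, rfl⟩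
    calc (z * (s • (-(d : ℂ) * I) + t • ((d : ℂ) * I))).re = d * ((s - t) * z.im) := by
          simp [mul_re]; ring
      _ ≤ d * |(s - t) * z.im| := by gcongr; exact le_abs_self _
      _ ≤ d * (1 * |z.im|) := by
          rw [abs_mul]; gcongr; exact abs_sub_le_iff.2 ⟨by linarith, by linarith⟩
      _ = d * |z.im| := by rw [one_mul]

/-- The weight `exp (H_K z + |z| / n)` against which the norm `‖·‖_{K,n}` is taken. -/
noncomputable def expWeight (K : Set ℂ) (n : ℕ) (z : ℂ) : ℝ :=
  Real.exp (suppFn K z + ‖z‖ / n)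

lemma expWeight_pos (K : Set ℂ) (n : ℕ) (z : ℂ) : 0 < expWeight K n z := Real.exp_pos _

lemma continuous_expWeight (hK : Bornology.IsBounded K) (hne : K.Nonempty) (n : ℕ) :
    Continuous (expWeight K n) := by
  unfold expWeight
  have := continuous_suppFn hK hne
  fun_prop

lemma mul_exp_le_iff_le_mul_expWeight (x : ℝ) :
    x * Real.exp (-(suppFn K z) - ‖z‖ / n) ≤ C ↔ x ≤ C * expWeight K n z := by
  rw [← neg_add', Real.exp_neg, ← div_eq_mul_inv, div_le_iff₀ (Real.exp_pos _), expWeight]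

lemma memExp_iff : MemExp K f ↔
    Differentiable ℂ f ∧ ∀ n : ℕ, 0 < n → ∃ C, ∀ z, ‖f z‖ ≤ C * expWeight K n z := by
  simp only [MemExp, bddAbove_def, Set.forall_mem_range, mul_exp_le_iff_le_mul_expWeight]

lemma expNorm_le (h : ∀ z, ‖f z‖ ≤ C * expWeight K n z) : expNorm K n f ≤ C :=
  csSup_le (Set.range_nonempty _) <|
    Set.forall_mem_range.2 fun z => (mul_exp_le_iff_le_mul_expWeight _).2 (h z)

end SupportFunction

section AnalyticCurve

open scoped Topology

variable {𝕜 E : Type*} [NontriviallyNormedField 𝕜] [NormedAddCommGroup E] [NormedSpace 𝕜 E]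
  {F : 𝕜 → E} {x₀ : 𝕜}

lemma analyticAt_of_eventually_hasSum {a : ℕ → E}
    (h : ∀ᶠ t in 𝓝 (0 : 𝕜), HasSum (fun m => t ^ m • a m) (F (x₀ + t))) : AnalyticAt 𝕜 F x₀ := by
  refine ⟨fun m => ContinuousMultilinearMap.mkPiRing 𝕜 (Fin m) (a m), hasFPowerSeriesAt_iff.2 ?_⟩
  simpa [FormalMultilinearSeries.coeff] using h

lemma analyticOnNhd_mem_of_eventually_mem {U : Set 𝕜} (hF : AnalyticOnNhd 𝕜 F U)
    (hU : IsPreconnected U) (hx₀ : x₀ ∈ U) {S : Submodule 𝕜 E} (hS : IsClosed (S : Set E))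
    (h : ∀ᶠ x in 𝓝 x₀, F x ∈ S) {x : 𝕜} (hx : x ∈ U) : F x ∈ S := by
  have hquot : AnalyticOnNhd 𝕜 (fun x => S.mkQL (F x)) U := fun x hx =>
    (ContinuousLinearMap.analyticAt _ _).comp (hF x hx)
  rw [← Submodule.Quotient.mk_eq_zero]
  refine hquot.eqOn_zero_of_preconnected_of_eventuallyEq_zero hU hx₀ ?_ hx
  filter_upwards [h] with y hy using (Submodule.Quotient.mk_eq_zero S).2 hy

end AnalyticCurve

section WeightedFunction

open scoped BoundedContinuousFunction Polynomial Nat Topology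

variable {K : Set ℂ} {f g : ℂ → ℂ} {C ε : ℝ} {n : ℕ}

open scoped Classical in
/-- `f / expWeight K n` as a bounded continuous function: it turns the norm `‖·‖_{K,n}` into the
supremum norm. Junk value `0` if the quotient is discontinuous or unbounded. -/
noncomputable def weighted (K : Set ℂ) (n : ℕ) (f : ℂ → ℂ) : ℂ →ᵇ ℂ :=
  if h : Continuous (fun z => f z / expWeight K n z) ∧ ∃ C, ∀ z, ‖f z / expWeight K n z‖ ≤ C then
    BoundedContinuousFunction.ofNormedAddCommGroup _ h.1 h.2.choose h.2.choose_spec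
  else 0

lemma norm_div_expWeight_le_iff (x z : ℂ) :
    ‖x / expWeight K n z‖ ≤ C ↔ ‖x‖ ≤ C * expWeight K n z := by
  rw [norm_div, norm_real, Real.norm_of_nonneg (expWeight_pos K n z).le,
    div_le_iff₀ (expWeight_pos K n z)]

lemma weighted_apply (hK : Bornology.IsBounded K) (hne : K.Nonempty) (hf : Continuous f)
    (hC : ∀ z, ‖f z‖ ≤ C * expWeight K n z) (z : ℂ) :
    weighted K n f z = f z / expWeight K n z := by
  have hcont : Continuous fun z => f z / expWeight K n z :=
    hf.div (continuous_ofReal.comp (continuous_expWeight hK hne n)) fun z =>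
      ofReal_ne_zero.2 (expWeight_pos K n z).ne'
  rw [weighted, dif_pos ⟨hcont, C, fun z => (norm_div_expWeight_le_iff _ _).2 (hC z)⟩]
  rfl

lemma norm_weighted_le (hK : Bornology.IsBounded K) (hne : K.Nonempty) (hf : Continuous f)
    (hC : ∀ z, ‖f z‖ ≤ C * expWeight K n z) : ‖weighted K n f‖ ≤ C := by
  rw [BoundedContinuousFunction.norm_le_of_nonempty]
  intro z
  rw [weighted_apply hK hne hf hC, norm_div_expWeight_le_iff]
  exact hC z

lemma dist_weighted_le_iff (hK : Bornology.IsBounded K) (hne : K.Nonempty)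
    (hf : Continuous f) (hfC : ∃ C, ∀ z, ‖f z‖ ≤ C * expWeight K n z)
    (hg : Continuous g) (hgC : ∃ C, ∀ z, ‖g z‖ ≤ C * expWeight K n z) :
    dist (weighted K n f) (weighted K n g) ≤ ε ↔ ∀ z, ‖f z - g z‖ ≤ ε * expWeight K n z := by
  rw [BoundedContinuousFunction.dist_le_iff_of_nonempty]
  refine forall_congr' fun z => ?_
  rw [weighted_apply hK hne hf hfC.choose_spec, weighted_apply hK hne hg hgC.choose_spec,
    dist_eq_norm, ← sub_div, norm_div_expWeight_le_iff]

lemma exists_one_add_pow_le_mul_exp_div (D : ℕ) {a : ℝ} (ha : 0 < a) :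
    ∃ C > 0, ∀ x ≥ 0, (1 + x) ^ D ≤ C * Real.exp (x / a) := by
  refine ⟨a ^ D * D ! * Real.exp (1 / a), by positivity, fun x hx => ?_⟩
  have h : ((1 + x) / a) ^ D / D ! ≤ Real.exp ((1 + x) / a) :=
    Real.pow_div_factorial_le_exp _ (by positivity) D
  rw [div_pow, div_div, div_le_iff₀ (by positivity), add_div, Real.exp_add] at h
  linarith

lemma exp_norm_div_le_expWeight (hK : Bornology.IsBounded K) (h0 : 0 ∈ K) (z : ℂ) :
    Real.exp (‖z‖ / n) ≤ expWeight K n z :=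
  Real.exp_le_exp.2 (le_add_of_nonneg_left (suppFn_nonneg hK h0 z))

lemma exists_norm_pow_le_mul_expWeight (hK : Bornology.IsBounded K) (h0 : 0 ∈ K) (hn : 0 < n)
    (m : ℕ) : ∃ C, ∀ z : ℂ, ‖z ^ m‖ ≤ C * expWeight K n z := by
  obtain ⟨C, hC0, hC⟩ := exists_one_add_pow_le_mul_exp_div m (Nat.cast_pos.2 hn : (0 : ℝ) < n)
  refine ⟨C, fun z => ?_⟩
  calc ‖z ^ m‖ = ‖z‖ ^ m := norm_pow z m
    _ ≤ (1 + ‖z‖) ^ m := by gcongr; linarith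
    _ ≤ C * Real.exp (‖z‖ / n) := hC _ (norm_nonneg z)
    _ ≤ C * expWeight K n z := by gcongr; exact exp_norm_div_le_expWeight hK h0 z

lemma MemExp.exists_bound_near_dilation (hK : Bornology.IsBounded K) (h0 : 0 ∈ K) (hn : 0 < n)
    (hg : MemExp K g) : ∃ ρ > 0, ∃ C, ∀ s ∈ Set.Icc (0 : ℝ) 1, ∀ z w : ℂ,
      ‖w - s * z‖ ≤ ρ * ‖z‖ → ‖g w‖ ≤ C * expWeight K n z := by
  obtain ⟨R, hR0, hR⟩ := exists_suppFn_le_mul_norm hK ⟨0, h0⟩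
  obtain ⟨C, hC⟩ := (memExp_iff.1 hg).2 (4 * n) (by positivity)
  have hC0 : 0 ≤ C :=
    nonneg_of_mul_nonneg_left ((norm_nonneg _).trans (hC 0)) (expWeight_pos K (4 * n) 0)
  have : (0 : ℝ) < n := Nat.cast_pos.2 hn
  refine ⟨min 1 (1 / (2 * n * R)), by positivity, C, fun s hs z w hw => (hC w).trans ?_⟩
  have hnorm : ‖w‖ ≤ 2 * ‖z‖ := by
    have hsz : ‖(s : ℂ) * z‖ ≤ 1 * ‖z‖ := by
      rw [norm_mul, norm_real, Real.norm_of_nonneg hs.1]; gcongr; exact hs.2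
    have hw1 : ‖w - s * z‖ ≤ 1 * ‖z‖ := hw.trans (by gcongr; exact min_le_left _ _)
    linarith [norm_le_norm_add_norm_sub' w (s * z)]
  have hsupp : suppFn K w ≤ suppFn K z + ‖z‖ / (2 * n) := by
    calc suppFn K w = suppFn K (s * z + (w - s * z)) := by rw [add_sub_cancel]
      _ ≤ suppFn K z + R * ‖w - s * z‖ :=
        (suppFn_add_le hK ⟨0, h0⟩ _ _).trans
          (add_le_add (suppFn_ofReal_mul_le hK h0 hs z) (hR _))
      _ ≤ suppFn K z + R * (1 / (2 * n * R) * ‖z‖) := by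
        gcongr; exact hw.trans (by gcongr; exact min_le_right _ _)
      _ = suppFn K z + ‖z‖ / (2 * n) := by field_simp
  refine mul_le_mul_of_nonneg_left (Real.exp_le_exp.2 ?_) hC0
  calc suppFn K w + ‖w‖ / (4 * n : ℕ)
      ≤ suppFn K z + ‖z‖ / (2 * n) + 2 * ‖z‖ / (4 * n : ℕ) := by gcongr
    _ = suppFn K z + ‖z‖ / n := by push_cast; field_simp; ring

/-- The `m`-th Taylor coefficient at `s` of the dilation curve `s ↦ g (s z)`. -/
noncomputable def dilationCoeff (g : ℂ → ℂ) (s : ℝ) (m : ℕ) (z : ℂ) : ℂ :=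
  z ^ m * (iteratedDeriv m g (s * z) / m !)

lemma continuous_dilationCoeff (hg : Differentiable ℂ g) (s : ℝ) (m : ℕ) :
    Continuous (dilationCoeff g s m) := by
  have : Continuous (iteratedDeriv m g) := hg.contDiff.continuous_iteratedDeriv' m
  unfold dilationCoeff
  fun_prop

lemma hasSum_dilationCoeff (hg : Differentiable ℂ g) (s t : ℝ) (z : ℂ) :
    HasSum (fun m => (t : ℂ) ^ m * dilationCoeff g s m z) (g ((s + t : ℝ) * z)) := by
  convert! Complex.hasSum_taylorSeries_of_entire hg (s * z) _ using 2 with m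
  rw [dilationCoeff, ofReal_add, add_mul, add_sub_cancel_left]
  simp only [smul_eq_mul]
  ring

lemma norm_dilationCoeff_le (hg : Differentiable ℂ g) {s r M : ℝ} (hr : 0 < r) {z : ℂ}
    (hM : ∀ w, ‖w - s * z‖ ≤ r * ‖z‖ → ‖g w‖ ≤ M) (m : ℕ) :
    ‖dilationCoeff g s m z‖ ≤ M / r ^ m := by
  have hM0 : 0 ≤ M := (norm_nonneg _).trans (hM (s * z) (by rw [sub_self, norm_zero]; positivity))
  rcases eq_or_ne z 0 with rfl | hz
  · rcases m.eq_zero_or_pos with rfl | hm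
    · simpa [dilationCoeff] using hM 0 (by simp)
    · simpa [dilationCoeff, hm.ne'] using div_nonneg hM0 (pow_nonneg hr.le m)
  · have hrz : 0 < r * ‖z‖ := mul_pos hr (norm_pos_iff.2 hz)
    have hcauchy : ‖iteratedDeriv m g (s * z)‖ ≤ m ! * M / (r * ‖z‖) ^ m :=
      Complex.norm_iteratedDeriv_le_of_forall_mem_sphere_norm_le m hrz hg.diffContOnCl
        fun w hw => hM w (mem_sphere_iff_norm.1 hw).le
    calc ‖dilationCoeff g s m z‖ = ‖z‖ ^ m * (‖iteratedDeriv m g (s * z)‖ / m !) := by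
          simp [dilationCoeff]
      _ ≤ ‖z‖ ^ m * (m ! * M / (r * ‖z‖) ^ m / m !) := by gcongr
      _ = M / r ^ m := by
          have := norm_pos_iff.2 hz
          rw [mul_pow]
          field_simp

lemma hasSum_weighted_dilation (hK : Bornology.IsBounded K) (hne : K.Nonempty)
    (hg : Differentiable ℂ g) {s ρ : ℝ} (hρ : 0 < ρ)
    (hC : ∀ z w : ℂ, ‖w - s * z‖ ≤ ρ * ‖z‖ → ‖g w‖ ≤ C * expWeight K n z) {t : ℝ} (ht : |t| < ρ) :
    HasSum (fun m => t ^ m • weighted K n (dilationCoeff g s m))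
      (weighted K n fun z => g ((s + t : ℝ) * z)) := by
  have hcoeff (m : ℕ) (z : ℂ) : ‖dilationCoeff g s m z‖ ≤ C / ρ ^ m * expWeight K n z :=
    (norm_dilationCoeff_le hg hρ (hC z) m).trans_eq (mul_div_right_comm _ _ _)
  have hdil (z : ℂ) : ‖g ((s + t : ℝ) * z)‖ ≤ C * expWeight K n z := by
    refine hC z _ ?_
    rw [ofReal_add, add_mul, add_sub_cancel_left, norm_mul, norm_real, Real.norm_eq_abs]
    gcongr
  have hcont : Continuous fun z : ℂ => g ((s + t : ℝ) * z) := hg.continuous.comp (by fun_prop)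
  have hsum : Summable fun m => t ^ m • weighted K n (dilationCoeff g s m) := by
    refine .of_norm_bounded ((summable_geometric_of_lt_one (r := |t| / ρ) (by positivity)
      ((div_lt_one hρ).2 ht)).mul_left C) fun m => ?_
    calc ‖t ^ m • weighted K n (dilationCoeff g s m)‖
        = |t| ^ m * ‖weighted K n (dilationCoeff g s m)‖ := by
          rw [norm_smul, norm_pow, Real.norm_eq_abs]
      _ ≤ |t| ^ m * (C / ρ ^ m) := by
          gcongr
          exact norm_weighted_le hK hne (continuous_dilationCoeff hg s m) (hcoeff m)
      _ = C * (|t| / ρ) ^ m := by rw [div_pow]; ring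
  have hlim : ∑' m, t ^ m • weighted K n (dilationCoeff g s m)
      = weighted K n fun z => g ((s + t : ℝ) * z) := by
    ext z
    refine (hsum.hasSum.mapL (BoundedContinuousFunction.evalCLM ℝ z)).unique ?_
    rw [weighted_apply hK hne hcont hdil]
    simp only [BoundedContinuousFunction.evalCLM_apply, BoundedContinuousFunction.smul_apply,
      weighted_apply hK hne (continuous_dilationCoeff hg s _) (hcoeff _),
      real_smul, ofReal_pow, ← mul_div_assoc]
    exact (hasSum_dilationCoeff hg s t z).div_const _
  exact hlim ▸ hsum.hasSum

/-- The closed span of the monomials in the weighted supremum norm. -/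
noncomputable def weightedMonomialSpan (K : Set ℂ) (n : ℕ) : Submodule ℂ (ℂ →ᵇ ℂ) :=
  (Submodule.span ℂ (Set.range fun m : ℕ => weighted K n (· ^ m))).topologicalClosure

lemma weighted_dilationCoeff_zero_mem (hK : Bornology.IsBounded K) (h0 : 0 ∈ K) (hn : 0 < n)
    (g : ℂ → ℂ) (m : ℕ) : weighted K n (dilationCoeff g 0 m) ∈ weightedMonomialSpan K n := by
  obtain ⟨C, hC⟩ := exists_norm_pow_le_mul_expWeight hK h0 hn m
  set a : ℂ := iteratedDeriv m g 0 / (m !)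
  have hcoeff : dilationCoeff g 0 m = fun z => z ^ m * a := by
    ext z; simp [dilationCoeff, a]
  have hweighted : weighted K n (dilationCoeff g 0 m) = a • weighted K n (· ^ m) := by
    ext z
    have ha (z : ℂ) : ‖z ^ m * a‖ ≤ ‖a‖ * C * expWeight K n z := by
      rw [norm_mul, mul_comm, mul_assoc]; gcongr; exact hC z
    rw [hcoeff, BoundedContinuousFunction.smul_apply,
      weighted_apply hK ⟨0, h0⟩ (by fun_prop) ha,
      weighted_apply hK ⟨0, h0⟩ (by fun_prop) hC, smul_eq_mul]
    ring
  rw [hweighted]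
  exact Submodule.le_topologicalClosure _
    (Submodule.smul_mem _ _ (Submodule.subset_span ⟨m, rfl⟩))

lemma MemExp.weighted_mem_weightedMonomialSpan (hK : Bornology.IsBounded K) (h0 : 0 ∈ K)
    (hn : 0 < n) (hg : MemExp K g) : weighted K n g ∈ weightedMonomialSpan K n := by
  obtain ⟨ρ, hρ, C, hC⟩ := hg.exists_bound_near_dilation hK h0 hn
  let F : ℝ → ℂ →ᵇ ℂ := fun s => weighted K n fun z => g (s * z)
  have hsum {s : ℝ} (hs : s ∈ Set.Icc (0 : ℝ) 1) : ∀ᶠ t in 𝓝 (0 : ℝ),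
      HasSum (fun m => t ^ m • weighted K n (dilationCoeff g s m)) (F (s + t)) := by
    filter_upwards [Metric.ball_mem_nhds 0 hρ] with t ht
    exact hasSum_weighted_dilation hK ⟨0, h0⟩ hg.1 hρ (hC s hs) (by simpa using ht)
  let S : Submodule ℝ (ℂ →ᵇ ℂ) := (weightedMonomialSpan K n).restrictScalars ℝ
  have hclosed : IsClosed (S : Set (ℂ →ᵇ ℂ)) := Submodule.isClosed_topologicalClosure _
  have hnear : ∀ᶠ t in 𝓝 (0 : ℝ), F t ∈ S := by
    filter_upwards [hsum ⟨le_rfl, zero_le_one⟩] with t ht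
    refine zero_add t ▸ hclosed.mem_of_tendsto ht (.of_forall fun A => ?_)
    exact Submodule.sum_mem _ fun m _ =>
      S.smul_mem _ (weighted_dilationCoeff_zero_mem hK h0 hn g m)
  have hone : F 1 ∈ S := analyticOnNhd_mem_of_eventually_mem
    (fun s hs => analyticAt_of_eventually_hasSum (hsum hs)) isPreconnected_Icc
    (Set.left_mem_Icc.2 zero_le_one) hclosed hnear (Set.right_mem_Icc.2 zero_le_one)
  have hF1 : F 1 = weighted K n g := by simp [F]
  exact hF1 ▸ hone

lemma isSeparable_weightedMonomialSpan (K : Set ℂ) (n : ℕ) :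
    TopologicalSpace.IsSeparable (weightedMonomialSpan K n : Set (ℂ →ᵇ ℂ)) := by
  rw [weightedMonomialSpan, Submodule.topologicalClosure_coe,
    TopologicalSpace.isSeparable_closure]
  exact (Set.countable_range _).isSeparable.span

lemma exists_polynomial_of_mem_span (hK : Bornology.IsBounded K) (h0 : 0 ∈ K) (hn : 0 < n)
    {F : ℂ →ᵇ ℂ} (hF : F ∈ Submodule.span ℂ (Set.range fun m : ℕ => weighted K n (· ^ m))) :
    ∃ p : ℂ[X], ∀ z, F z = p.eval z / expWeight K n z := by
  induction hF using Submodule.span_induction with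
  | mem F hF =>
    obtain ⟨m, rfl⟩ := hF
    obtain ⟨C, hC⟩ := exists_norm_pow_le_mul_expWeight hK h0 hn m
    exact ⟨.X ^ m, fun z => by simp [weighted_apply hK ⟨0, h0⟩ (by fun_prop) hC]⟩
  | zero => exact ⟨0, by simp⟩
  | add F G _ _ hF hG =>
    obtain ⟨p, hp⟩ := hF
    obtain ⟨q, hq⟩ := hG
    exact ⟨p + q, fun z => by simp [hp, hq, add_div]⟩
  | smul a F _ hF =>
    obtain ⟨p, hp⟩ := hF
    exact ⟨.C a * p, fun z => by simp [hp, mul_div_assoc]⟩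

lemma MemExp.exists_polynomial_approx (hK : Bornology.IsBounded K) (h0 : 0 ∈ K) (hn : 0 < n)
    (hg : MemExp K g) (hε : 0 < ε) :
    ∃ p : ℂ[X], ∀ z, ‖g z - p.eval z‖ ≤ ε * expWeight K n z := by
  obtain ⟨C, hC⟩ := (memExp_iff.1 hg).2 n hn
  obtain ⟨F, hF, hdist⟩ :=
    Metric.mem_closure_iff.1 (hg.weighted_mem_weightedMonomialSpan hK h0 hn) ε hε
  obtain ⟨p, hp⟩ := exists_polynomial_of_mem_span hK h0 hn hF
  refine ⟨p, fun z => (norm_div_expWeight_le_iff _ _).1 ?_⟩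
  rw [sub_div, ← hp, ← weighted_apply hK ⟨0, h0⟩ hg.1.continuous hC, ← dist_eq_norm]
  exact (BoundedContinuousFunction.dist_coe_le_dist z).trans hdist.le

lemma exists_countable_weighted_dense (hK : Bornology.IsBounded K) (h0 : 0 ∈ K) (hn : 0 < n)
    {A : Set (ℂ → ℂ)} (hA : ∀ g ∈ A, MemExp K g) :
    ∃ T ⊆ A, T.Countable ∧ ∀ g ∈ A, ∀ ε > 0, ∃ h ∈ T, ∀ z,
      ‖g z - h z‖ ≤ ε * expWeight K n z := by
  have hsep : TopologicalSpace.IsSeparable (weighted K n '' A) :=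
    (isSeparable_weightedMonomialSpan K n).mono <| Set.image_subset_iff.2 fun g hg =>
      (hA g hg).weighted_mem_weightedMonomialSpan hK h0 hn
  obtain ⟨D, hDA, hDcount, hDdense⟩ := hsep.exists_countable_dense_subset
  obtain ⟨T, hTA, hTinj, hTD⟩ := Set.SurjOn.exists_subset_injOn_image_eq hDA
  refine ⟨T, hTA, Set.countable_of_injective_of_countable_image hTinj (hTD ▸ hDcount),
    fun g hg ε hε => ?_⟩
  obtain ⟨_, hmem, hdist⟩ := Metric.mem_closure_iff.1 (hDdense ⟨g, hg, rfl⟩) ε hε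
  obtain ⟨h, hT, rfl⟩ := hTD ▸ hmem
  have hbound {f : ℂ → ℂ} (hf : f ∈ A) := (memExp_iff.1 (hA f hf)).2 n hn
  exact ⟨h, hT, (dist_weighted_le_iff hK ⟨0, h0⟩ (hA g hg).1.continuous (hbound hg)
    (hA h (hTA hT)).1.continuous (hbound (hTA hT))).1 hdist.le⟩

end WeightedFunction

section Multiplier

open scoped Polynomial

lemma differentiable_dslope {f : ℂ → ℂ} (hf : Differentiable ℂ f) (c : ℂ) :
    Differentiable ℂ (dslope f c) :=
  differentiableOn_univ.1 ((differentiableOn_dslope univ_mem).2 hf.differentiableOn)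

lemma exists_norm_dslope_mul_le {f : ℂ → ℂ} (hf : Differentiable ℂ f) {A a : ℝ} (ha : 0 ≤ a)
    (hA : ∀ z, ‖f z‖ ≤ A * Real.exp (a * |z.im|)) :
    ∃ B > 0, ∀ z, ‖dslope f 0 z‖ * (1 + ‖z‖) ≤ B * Real.exp (a * |z.im|) := by
  obtain ⟨M, hM⟩ := (isCompact_closedBall (0 : ℂ) 1).exists_bound_of_continuousOn
    (differentiable_dslope hf 0).continuous.continuousOn
  have hM0 : 0 ≤ M := (norm_nonneg _).trans (hM 0 (by simp))
  have hA0 : 0 ≤ A := by simpa using (norm_nonneg _).trans (hA 0)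
  refine ⟨2 * M + 4 * A + 1, by positivity, fun z => ?_⟩
  have hexp : 1 ≤ Real.exp (a * |z.im|) := Real.one_le_exp (by positivity)
  rcases le_total ‖z‖ 1 with hz | hz
  · calc ‖dslope f 0 z‖ * (1 + ‖z‖) ≤ M * (1 + 1) := by
          gcongr; exact hM z (mem_closedBall_zero_iff.2 hz)
      _ ≤ (2 * M + 4 * A + 1) * 1 := by linarith
      _ ≤ (2 * M + 4 * A + 1) * Real.exp (a * |z.im|) := by gcongr
  · have hslope : ‖z‖ * ‖dslope f 0 z‖ ≤ 2 * A * Real.exp (a * |z.im|) := by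
      have h0 : ‖f 0‖ ≤ A * Real.exp (a * |z.im|) :=
        (hA 0).trans (mul_le_mul_of_nonneg_left (by simpa using hexp) hA0)
      calc ‖z‖ * ‖dslope f 0 z‖ = ‖f z - f 0‖ := by
            rw [← norm_mul, ← smul_eq_mul]
            simpa using congrArg norm (sub_smul_dslope f 0 z)
        _ ≤ ‖f z‖ + ‖f 0‖ := norm_sub_le _ _
        _ ≤ 2 * A * Real.exp (a * |z.im|) := by linarith [hA z]
    calc ‖dslope f 0 z‖ * (1 + ‖z‖) ≤ ‖dslope f 0 z‖ * (‖z‖ + ‖z‖) := by gcongr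
      _ = 2 * (‖z‖ * ‖dslope f 0 z‖) := by ring
      _ ≤ 2 * (2 * A * Real.exp (a * |z.im|)) := by gcongr
      _ ≤ (2 * M + 4 * A + 1) * Real.exp (a * |z.im|) := by nlinarith

lemma norm_complex_sin_le (z : ℂ) : ‖sin z‖ ≤ Real.exp |z.im| := by
  have h₁ : ‖exp (-z * I)‖ ≤ Real.exp |z.im| := by
    rw [norm_exp]; gcongr; simpa using le_abs_self _
  have h₂ : ‖exp (z * I)‖ ≤ Real.exp |z.im| := by
    rw [norm_exp]; gcongr; simpa using neg_le_abs _
  rw [sin, norm_div, norm_mul, norm_I, mul_one, norm_ofNat, div_le_iff₀ two_pos, mul_two]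
  exact (norm_sub_le _ _).trans (add_le_add h₁ h₂)

/-- The entire function `sin z / z`, with value `1` at `0`: a multiplier that decays along the
real axis. -/
noncomputable def cardinalSine : ℂ → ℂ := dslope sin 0

lemma differentiable_cardinalSine : Differentiable ℂ cardinalSine :=
  differentiable_dslope differentiable_sin 0

lemma cardinalSine_zero : cardinalSine 0 = 1 := by
  simp [cardinalSine]

lemma exists_norm_cardinalSine_mul_le :
    ∃ A > 0, ∀ z, ‖cardinalSine z‖ * (1 + ‖z‖) ≤ A * Real.exp |z.im| := by
  simpa [cardinalSine] using exists_norm_dslope_mul_le differentiable_sin (A := 1) zero_le_one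
    (by simpa using norm_complex_sin_le)

lemma exists_norm_cardinalSine_pow_sub_one_le (M : ℕ) :
    ∃ B > 0, ∀ z, ‖cardinalSine z ^ M - 1‖ ≤ B * ‖z‖ * Real.exp (M * |z.im|) := by
  obtain ⟨A, _hA0, hA⟩ := exists_norm_cardinalSine_mul_le
  have hpow (z : ℂ) : ‖cardinalSine z ^ M‖ ≤ A ^ M * Real.exp (M * |z.im|) := by
    rw [norm_pow, Real.exp_nat_mul, ← mul_pow]
    gcongr
    exact (le_mul_of_one_le_right (norm_nonneg _) (by simp)).trans (hA z)
  obtain ⟨B, hB0, hB⟩ := exists_norm_dslope_mul_le (differentiable_cardinalSine.pow M)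
    M.cast_nonneg hpow
  refine ⟨B, hB0, fun z => ?_⟩
  have hslope := sub_smul_dslope (cardinalSine ^ M) 0 z
  simp only [sub_zero, smul_eq_mul, Pi.pow_apply, cardinalSine_zero, one_pow] at hslope
  calc ‖cardinalSine z ^ M - 1‖ = ‖z‖ * ‖dslope (cardinalSine ^ M) 0 z‖ := by
        rw [← hslope, norm_mul]
    _ ≤ ‖z‖ * (‖dslope (cardinalSine ^ M) 0 z‖ * (1 + ‖z‖)) := by
        gcongr; exact le_mul_of_one_le_right (norm_nonneg _) (by simp)
    _ ≤ ‖z‖ * (B * Real.exp (M * |z.im|)) := by gcongr ‖z‖ * ?_; exact hB z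
    _ = B * ‖z‖ * Real.exp (M * |z.im|) := by ring

lemma exists_norm_polynomial_eval_le (p : ℂ[X]) :
    ∃ C > 0, ∀ z, ‖p.eval z‖ ≤ C * (1 + ‖z‖) ^ p.natDegree := by
  refine ⟨∑ i ∈ Finset.range (p.natDegree + 1), ‖p.coeff i‖ + 1, by positivity, fun z => ?_⟩
  rw [Polynomial.eval_eq_sum_range, add_mul, Finset.sum_mul]
  refine le_add_of_le_of_nonneg (norm_sum_le_of_le _ fun i hi => ?_) (by positivity)
  rw [norm_mul, norm_pow]
  gcongr ‖p.coeff i‖ * ?_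
  calc ‖z‖ ^ i ≤ (1 + ‖z‖) ^ i := by gcongr; linarith
    _ ≤ (1 + ‖z‖) ^ p.natDegree :=
      pow_le_pow_right₀ (by simp) (Nat.le_of_lt_succ (Finset.mem_range.1 hi))

/-- Decay of order `|z|⁻⁴` relative to `exp (d |Im z|)`: two of the four powers will absorb the
growth of the constants `C` along a family of blocks, and the other two make the sum over
separated translates converge. -/
def HasQuarticDecay (d : ℝ) (g : ℂ → ℂ) (C : ℝ) : Prop :=
  ∀ z, ‖g z‖ ≤ C * Real.exp (d * |z.im|) / (1 + ‖z‖) ^ 4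

lemma expWeight_segment {d : ℝ} (hd : 0 ≤ d) (n : ℕ) (z : ℂ) :
    expWeight (segment ℝ (-(d : ℂ) * I) ((d : ℂ) * I)) n z
      = Real.exp (d * |z.im|) * Real.exp (‖z‖ / n) := by
  rw [expWeight, suppFn_segment hd, Real.exp_add]

lemma isBounded_segment {E : Type*} [SeminormedAddCommGroup E] [NormedSpace ℝ E] (x y : E) :
    Bornology.IsBounded (segment ℝ x y) := by
  rw [← convexHull_pair]
  exact isBounded_convexHull.2 (Set.toFinite _).isBounded

lemma zero_mem_segment_neg {E : Type*} [AddCommGroup E] [Module ℝ E] (w : E) :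
    0 ∈ segment ℝ (-w) w :=
  ⟨1 / 2, 1 / 2, by norm_num⟩

lemma HasQuarticDecay.nonneg {d C : ℝ} {g : ℂ → ℂ} (hg : HasQuarticDecay d g C) : 0 ≤ C := by
  simpa using (norm_nonneg _).trans (hg 0)

lemma HasQuarticDecay.memExp {d C : ℝ} {g : ℂ → ℂ} (hd : 0 ≤ d) (hg : HasQuarticDecay d g C)
    (hdiff : Differentiable ℂ g) : MemExp (segment ℝ (-(d : ℂ) * I) ((d : ℂ) * I)) g := by
  refine memExp_iff.2 ⟨hdiff, fun n _ => ⟨C, fun z => (hg z).trans ?_⟩⟩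
  have hC := hg.nonneg
  rw [expWeight_segment hd]
  refine (div_le_self (by positivity) (one_le_pow₀ (by simp))).trans ?_
  gcongr
  exact le_mul_of_one_le_right (by positivity) (Real.one_le_exp (by positivity))

lemma exists_hasQuarticDecay_mul_cardinalSine_pow {p : ℂ → ℂ} {P : ℝ} {D : ℕ}
    (hp : ∀ z, ‖p z‖ ≤ P * (1 + ‖z‖) ^ D) {d η : ℝ} (hη0 : 0 < η) (hη1 : η ≤ 1)
    (hηd : (D + 4 : ℕ) * η ≤ d) :
    ∃ C, HasQuarticDecay d (fun z => p z * cardinalSine (η * z) ^ (D + 4)) C := by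
  obtain ⟨A, hA0, hA⟩ := exists_norm_cardinalSine_mul_le
  have hP0 : 0 ≤ P := by simpa using (norm_nonneg _).trans (hp 0)
  have hsinc (z : ℂ) : ‖cardinalSine (η * z)‖ ≤ A / η * Real.exp (η * |z.im|) / (1 + ‖z‖) := by
    have h := hA (η * z)
    rw [norm_mul, norm_real, Real.norm_of_nonneg hη0.le, im_ofReal_mul, abs_mul,
      abs_of_pos hη0] at h
    rw [le_div_iff₀ (by positivity), div_mul_eq_mul_div, le_div_iff₀ hη0]
    calc ‖cardinalSine (η * z)‖ * (1 + ‖z‖) * η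
        = ‖cardinalSine (η * z)‖ * (η + η * ‖z‖) := by ring
      _ ≤ ‖cardinalSine (η * z)‖ * (1 + η * ‖z‖) := by gcongr
      _ ≤ A * Real.exp (η * |z.im|) := h
  refine ⟨P * (A / η) ^ (D + 4), fun z => ?_⟩
  calc ‖p z * cardinalSine (η * z) ^ (D + 4)‖
      ≤ P * (1 + ‖z‖) ^ D * (A / η * Real.exp (η * |z.im|) / (1 + ‖z‖)) ^ (D + 4) := by
        rw [norm_mul, norm_pow]; gcongr; exacts [hp z, hsinc z]
    _ = P * (A / η) ^ (D + 4) * Real.exp ((D + 4 : ℕ) * η * |z.im|) / (1 + ‖z‖) ^ 4 := by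
        rw [mul_assoc ((D + 4 : ℕ) : ℝ), Real.exp_nat_mul, div_pow, mul_pow, pow_add (1 + ‖z‖)]
        field_simp
    _ ≤ P * (A / η) ^ (D + 4) * Real.exp (d * |z.im|) / (1 + ‖z‖) ^ 4 := by gcongr

lemma exists_norm_sub_mul_cardinalSine_pow_le {p : ℂ → ℂ} {P : ℝ} {D : ℕ}
    (hp : ∀ z, ‖p z‖ ≤ P * (1 + ‖z‖) ^ D) (M : ℕ) :
    ∃ B > 0, ∀ η ≥ 0, ∀ z, ‖p z - p z * cardinalSine ((η : ℝ) * z) ^ M‖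
      ≤ B * η * (1 + ‖z‖) ^ (D + 1) * Real.exp (M * η * |z.im|) := by
  obtain ⟨B, hB0, hB⟩ := exists_norm_cardinalSine_pow_sub_one_le M
  have hP0 : 0 ≤ P := by simpa using (norm_nonneg _).trans (hp 0)
  refine ⟨P * B + 1, by positivity, fun η hη z => ?_⟩
  have hsinc := hB (η * z)
  rw [norm_mul, norm_real, Real.norm_of_nonneg hη, im_ofReal_mul, abs_mul,
    abs_of_nonneg hη, ← mul_assoc (M : ℝ)] at hsinc
  calc ‖p z - p z * cardinalSine (η * z) ^ M‖
      = ‖p z‖ * ‖cardinalSine (η * z) ^ M - 1‖ := by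
        rw [← norm_mul, ← norm_neg]; congr 1; ring
    _ ≤ P * (1 + ‖z‖) ^ D * (B * (η * (1 + ‖z‖)) * Real.exp (M * η * |z.im|)) := by
        gcongr
        · exact hp z
        · refine hsinc.trans ?_
          gcongr
          linarith
    _ = P * B * (η * (1 + ‖z‖) ^ (D + 1) * Real.exp (M * η * |z.im|)) := by ring
    _ ≤ (P * B + 1) * (η * (1 + ‖z‖) ^ (D + 1) * Real.exp (M * η * |z.im|)) := by
        gcongr; linarith
    _ = _ := by ring

lemma exists_hasQuarticDecay_approx_polynomial {d : ℝ} (hd : 0 < d) {n : ℕ} (hn : 0 < n) (p : ℂ[X])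
    {ε : ℝ} (hε : 0 < ε) : ∃ h : ℂ → ℂ, Differentiable ℂ h ∧ (∃ C, HasQuarticDecay d h C) ∧
      ∀ z, ‖p.eval z - h z‖ ≤ ε * expWeight (segment ℝ (-(d : ℂ) * I) ((d : ℂ) * I)) n z := by
  obtain ⟨P, -, hP⟩ := exists_norm_polynomial_eval_le p
  set D := p.natDegree
  obtain ⟨B, hB0, hB⟩ := exists_norm_sub_mul_cardinalSine_pow_le hP (D + 4)
  obtain ⟨C, hC0, hC⟩ :=
    exists_one_add_pow_le_mul_exp_div (D + 1) (Nat.cast_pos.2 hn : (0 : ℝ) < n)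
  obtain ⟨η, hη0, hη⟩ : ∃ η > 0, η ≤ min 1 (min (d / (D + 4 : ℕ)) (ε / (B * C))) :=
    ⟨_, by positivity, le_rfl⟩
  obtain ⟨hη1, hηd, hηε⟩ := by simpa only [le_min_iff] using hη
  rw [le_div_iff₀' (by positivity)] at hηd
  rw [le_div_iff₀ (by positivity)] at hηε
  refine ⟨fun z => p.eval z * cardinalSine (η * z) ^ (D + 4), ?_,
    exists_hasQuarticDecay_mul_cardinalSine_pow hP hη0 hη1 hηd, fun z => ?_⟩
  · exact p.differentiable.mul
      ((differentiable_cardinalSine.comp (differentiable_id.const_mul _)).pow _)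
  calc ‖p.eval z - p.eval z * cardinalSine (η * z) ^ (D + 4)‖
      ≤ B * η * (1 + ‖z‖) ^ (D + 1) * Real.exp ((D + 4 : ℕ) * η * |z.im|) := hB η hη0.le z
    _ ≤ B * η * (C * Real.exp (‖z‖ / n)) * Real.exp (d * |z.im|) := by
        gcongr; exact hC _ (norm_nonneg z)
    _ = η * (B * C) * expWeight (segment ℝ (-(d : ℂ) * I) ((d : ℂ) * I)) n z := by
        rw [expWeight_segment hd.le]; ring
    _ ≤ _ := by gcongr; exact (expWeight_pos _ _ _).le

theorem exists_countable_hasQuarticDecay_dense {d : ℝ} (hd : 0 < d) :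
    ∃ T : Set (ℂ → ℂ), T.Countable ∧
      (∀ h ∈ T, Differentiable ℂ h ∧ ∃ C, HasQuarticDecay d h C) ∧
      ∀ g, MemExp (segment ℝ (-(d : ℂ) * I) ((d : ℂ) * I)) g → ∀ n, 0 < n → ∀ ε > 0, ∃ h ∈ T,
        ∀ z, ‖g z - h z‖ ≤ ε * expWeight (segment ℝ (-(d : ℂ) * I) ((d : ℂ) * I)) n z := by
  set K := segment ℝ (-(d : ℂ) * I) ((d : ℂ) * I)
  have hK : Bornology.IsBounded K := isBounded_segment _ _
  have h0 : 0 ∈ K := by simpa [K] using zero_mem_segment_neg ((d : ℂ) * I)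
  let A : Set (ℂ → ℂ) := {h | Differentiable ℂ h ∧ ∃ C, HasQuarticDecay d h C}
  choose T hTA hTcount hTdense using fun n : ℕ =>
    exists_countable_weighted_dense hK h0 n.succ_pos fun g (hg : g ∈ A) =>
      hg.2.choose_spec.memExp hd.le hg.1
  refine ⟨⋃ n, T n, Set.countable_iUnion hTcount, fun h hh => ?_, fun g hg n hn ε hε => ?_⟩
  · obtain ⟨n, hn⟩ := Set.mem_iUnion.1 hh
    exact hTA n hn
  obtain ⟨n, rfl⟩ := Nat.exists_eq_add_one.2 hn
  obtain ⟨p, hp⟩ := hg.exists_polynomial_approx hK h0 hn (ε := ε / 3) (by positivity)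
  obtain ⟨h₁, hdiff, hdecay, hh₁⟩ :=
    exists_hasQuarticDecay_approx_polynomial hd hn p (ε := ε / 3) (by positivity)
  obtain ⟨h, hT, hh⟩ := hTdense n h₁ ⟨hdiff, hdecay⟩ (ε / 3) (by positivity)
  refine ⟨h, Set.mem_iUnion.2 ⟨n, hT⟩, fun z => ?_⟩
  calc ‖g z - h z‖ = ‖(g z - p.eval z) + (p.eval z - h₁ z) + (h₁ z - h z)‖ := by
        congr 1; ring
    _ ≤ ‖g z - p.eval z‖ + ‖p.eval z - h₁ z‖ + ‖h₁ z - h z‖ := norm_add₃_le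
    _ ≤ ε * expWeight K (n + 1) z := by linarith [hp z, hh₁ z, hh z]

end Multiplier

section SeparatedSum

variable {ι : Type*} {κ : ι → ℝ}

lemma summable_one_div_one_add_abs_int_sq :
    Summable fun j : ℤ => 1 / (1 + |(j : ℝ)|) ^ 2 := by
  have h : Summable fun m : ℕ => 1 / (1 + (m : ℝ)) ^ 2 := by
    simpa [add_comm] using
      (summable_nat_add_iff 1).2 (Real.summable_one_div_nat_pow.2 (one_lt_two : 1 < 2))
  exact .of_nat_of_neg (by simpa using h) (by simpa using h)

/-- A bound for `∑ 1 / (1 + |x - κ i|) ^ 2` over any family `κ` of `1`-separated reals. -/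
noncomputable def sepSumBound : ℝ := 4 * ∑' j : ℤ, 1 / (1 + |(j : ℝ)|) ^ 2

lemma sepSumBound_nonneg : 0 ≤ sepSumBound := by
  unfold sepSumBound
  positivity

lemma floor_injective_of_pairwise_one_le (hκ : Pairwise fun i j => 1 ≤ |κ i - κ j|) :
    Function.Injective fun i => ⌊κ i⌋ := by
  intro i j hij
  by_contra hne
  exact (Int.abs_sub_lt_one_of_floor_eq_floor hij).not_ge (hκ hne)

lemma one_div_one_add_abs_sub_sq_le (x y : ℝ) :
    1 / (1 + |x - y|) ^ 2 ≤ 4 * (1 / (1 + |((⌊y⌋ - ⌊x⌋ : ℤ) : ℝ)|) ^ 2) := by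
  have hfloor : 1 + |((⌊y⌋ - ⌊x⌋ : ℤ) : ℝ)| ≤ 2 * (1 + |x - y|) := by
    push_cast
    have : |(⌊y⌋ : ℝ) - ⌊x⌋| ≤ |x - y| + 1 := by
      rw [abs_sub_comm x y, abs_le]
      constructor <;>
        linarith [Int.floor_le x, Int.floor_le y, Int.lt_floor_add_one x, Int.lt_floor_add_one y,
          le_abs_self (y - x), neg_abs_le (y - x)]
    linarith [abs_nonneg (x - y)]
  rw [mul_one_div, div_le_div_iff₀ (by positivity) (by positivity)]
  nlinarith [pow_le_pow_left₀ (by positivity) hfloor 2]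

lemma tsum_one_div_one_add_abs_sub_sq_le (hκ : Pairwise fun i j => 1 ≤ |κ i - κ j|) (x : ℝ) :
    (Summable fun i => 1 / (1 + |x - κ i|) ^ 2) ∧
      ∑' i, 1 / (1 + |x - κ i|) ^ 2 ≤ sepSumBound := by
  have hinj : Function.Injective fun i => ⌊κ i⌋ - ⌊x⌋ :=
    sub_left_injective.comp (floor_injective_of_pairwise_one_le hκ)
  have hmaj := (summable_one_div_one_add_abs_int_sq.comp_injective hinj).mul_left 4
  have hsum : Summable fun i => 1 / (1 + |x - κ i|) ^ 2 :=
    hmaj.of_nonneg_of_le (fun i => by positivity) fun i => one_div_one_add_abs_sub_sq_le x (κ i)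
  refine ⟨hsum,
    (hsum.tsum_le_tsum (fun i => one_div_one_add_abs_sub_sq_le x (κ i)) hmaj).trans ?_⟩
  rw [sepSumBound, ← tsum_mul_left]
  exact tsum_comp_le_tsum_of_inj (summable_one_div_one_add_abs_int_sq.mul_left 4)
    (fun j => by positivity) hinj

end SeparatedSum

section Blocks

variable {ι : Type*}

/-- Entire blocks `h i`, to be centred at `κ i`, whose decay constants `b i` are dominated by the
gauge `Q` beyond the radius `r i`, while the intervals of radius `r i` around the `κ i` stay at
distance `1` from each other and each `κ i` is at least the length of its interval. -/
structure IsBlockSystem (d : ℝ) (Q : ℝ → ℝ) (h : ι → ℂ → ℂ) (b κ r : ι → ℝ) : Prop where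
  gauge_mem (t : ℝ) : 0 ≤ t → Q t ∈ Set.Icc 1 (1 + t)
  differentiable (i : ι) : Differentiable ℂ (h i)
  decay (i : ι) : HasQuarticDecay d (h i) (b i)
  radius_nonneg (i : ι) : 0 ≤ r i
  le_gauge (i : ι) (t : ℝ) : r i ≤ t → b i ≤ Q t
  two_mul_radius_le (i : ι) : 2 * r i ≤ κ i
  separated : Pairwise fun i j => r i + r j + 1 ≤ |κ i - κ j|

/-- The superposition of the blocks `h i`, each translated to its centre `κ i`. -/
noncomputable def blockSum (h : ι → ℂ → ℂ) (κ : ι → ℝ) (z : ℂ) : ℂ := ∑' i, h i (z - κ i)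

namespace IsBlockSystem

variable {d : ℝ} {Q : ℝ → ℝ} {h : ι → ℂ → ℂ} {b κ r : ι → ℝ}

lemma pairwise_one_le (hB : IsBlockSystem d Q h b κ r) : Pairwise fun i j => 1 ≤ |κ i - κ j| :=
  hB.separated.mono fun i j hij => by linarith [hB.radius_nonneg i, hB.radius_nonneg j]

lemma le_gauge_mul_sq (hB : IsBlockSystem d Q h b κ r) (i : ι) (x : ℝ) :
    b i ≤ Q |x| * (1 + |x - κ i|) ^ 2 := by
  have hQ := (hB.gauge_mem |x| (abs_nonneg x)).1
  have hy : 1 ≤ 1 + |x - κ i| := by simp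
  rcases le_total (r i) |x| with hx | hx
  · exact (hB.le_gauge i _ hx).trans
      (le_mul_of_one_le_right (by linarith) (one_le_pow₀ hy))
  · have hr : r i ≤ |x - κ i| := by
      linarith [hB.two_mul_radius_le i, le_abs_self x, neg_abs_le (x - κ i)]
    calc b i ≤ 1 + r i := (hB.le_gauge i _ le_rfl).trans (hB.gauge_mem _ (hB.radius_nonneg i)).2
      _ ≤ 1 + |x - κ i| := by gcongr
      _ ≤ (1 + |x - κ i|) ^ 2 := le_self_pow₀ hy two_ne_zero
      _ ≤ Q |x| * (1 + |x - κ i|) ^ 2 := le_mul_of_one_le_left (by positivity) hQ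

lemma norm_block_le (hB : IsBlockSystem d Q h b κ r) (i : ι) (z : ℂ) :
    ‖h i (z - κ i)‖ ≤
      Q |z.re| * Real.exp (d * |z.im|) * (1 / (1 + |z.re - κ i|) ^ 2) := by
  have hb := (hB.decay i).nonneg
  have hre : |z.re - κ i| ≤ ‖z - κ i‖ := by simpa using abs_re_le_norm (z - κ i)
  calc ‖h i (z - κ i)‖
      ≤ b i * Real.exp (d * |z.im|) / (1 + ‖z - κ i‖) ^ 4 := by simpa using hB.decay i (z - κ i)
    _ ≤ b i * Real.exp (d * |z.im|) / (1 + |z.re - κ i|) ^ 4 := by gcongr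
    _ ≤ Q |z.re| * (1 + |z.re - κ i|) ^ 2 * Real.exp (d * |z.im|) / (1 + |z.re - κ i|) ^ 4 := by
        gcongr; exact hB.le_gauge_mul_sq i z.re
    _ = Q |z.re| * Real.exp (d * |z.im|) * (1 / (1 + |z.re - κ i|) ^ 2) := by field_simp

lemma summable_majorant (hB : IsBlockSystem d Q h b κ r) (z : ℂ) : Summable fun i =>
    Q |z.re| * Real.exp (d * |z.im|) * (1 / (1 + |z.re - κ i|) ^ 2) :=
  (tsum_one_div_one_add_abs_sub_sq_le hB.pairwise_one_le z.re).1.mul_left _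

lemma norm_blockSum_le (hB : IsBlockSystem d Q h b κ r) (z : ℂ) :
    ‖blockSum h κ z‖ ≤ sepSumBound * Q |z.re| * Real.exp (d * |z.im|) := by
  have hQ : 0 ≤ Q |z.re| := zero_le_one.trans (hB.gauge_mem _ (abs_nonneg _)).1
  refine (tsum_of_norm_bounded (hB.summable_majorant z).hasSum fun i =>
    hB.norm_block_le i z).trans ?_
  rw [tsum_mul_left, mul_assoc sepSumBound, mul_comm sepSumBound]
  gcongr
  exact (tsum_one_div_one_add_abs_sub_sq_le hB.pairwise_one_le z.re).2

lemma norm_block_le_of_norm_le (hB : IsBlockSystem d Q h b κ r) (hd : 0 ≤ d) (i : ι) {R : ℝ}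
    {z : ℂ} (hz : ‖z‖ ≤ R) : ‖h i (z - κ i)‖ ≤
      (1 + R) ^ 3 * Real.exp (d * R) * (1 / (1 + |0 - κ i|) ^ 2) := by
  have hR : 0 ≤ R := (norm_nonneg z).trans hz
  have hre : |z.re| ≤ R := (abs_re_le_norm z).trans hz
  have hQ : Q |z.re| ≤ 1 + R := (hB.gauge_mem _ (abs_nonneg _)).2.trans (by gcongr)
  have hκ : 1 + |0 - κ i| ≤ (1 + R) * (1 + |z.re - κ i|) := by
    have := abs_sub_le 0 z.re (κ i)
    rw [zero_sub z.re, abs_neg] at this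
    nlinarith [abs_nonneg (z.re - κ i)]
  calc ‖h i (z - κ i)‖
      ≤ Q |z.re| * Real.exp (d * |z.im|) * (1 / (1 + |z.re - κ i|) ^ 2) := hB.norm_block_le i z
    _ ≤ (1 + R) * Real.exp (d * R) * ((1 + R) ^ 2 * (1 / (1 + |0 - κ i|) ^ 2)) := by
        gcongr ?_ * Real.exp (d * ?_) * ?_
        · exact (abs_im_le_norm z).trans hz
        · rw [mul_one_div, div_le_div_iff₀ (by positivity) (by positivity), one_mul, ← mul_pow]
          gcongr
    _ = (1 + R) ^ 3 * Real.exp (d * R) * (1 / (1 + |0 - κ i|) ^ 2) := by ring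

lemma differentiable_blockSum (hB : IsBlockSystem d Q h b κ r) (hd : 0 ≤ d) :
    Differentiable ℂ (blockSum h κ) := by
  intro z
  have hdiff : DifferentiableOn ℂ (blockSum h κ) (Metric.ball 0 (‖z‖ + 1)) :=
    differentiableOn_tsum_of_summable_norm
      ((tsum_one_div_one_add_abs_sub_sq_le hB.pairwise_one_le 0).1.mul_left _)
      (fun i => ((hB.differentiable i).comp (differentiable_id.sub_const _)).differentiableOn)
      Metric.isOpen_ball fun i w hw => hB.norm_block_le_of_norm_le hd i (mem_ball_zero_iff.1 hw).le
  exact hdiff.differentiableAt (Metric.isOpen_ball.mem_nhds (by simp))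

lemma memExp_blockSum (hB : IsBlockSystem d Q h b κ r) (hd : 0 ≤ d) :
    MemExp (segment ℝ (-(d : ℂ) * I) ((d : ℂ) * I)) (blockSum h κ) := by
  refine memExp_iff.2 ⟨hB.differentiable_blockSum hd, fun n hn => ?_⟩
  obtain ⟨C, _hC0, hC⟩ := exists_one_add_pow_le_mul_exp_div 1 (Nat.cast_pos.2 hn : (0 : ℝ) < n)
  have hS := sepSumBound_nonneg
  refine ⟨sepSumBound * C, fun z => ?_⟩
  have hQ : Q |z.re| ≤ C * Real.exp (‖z‖ / n) :=
    calc Q |z.re| ≤ 1 + |z.re| := (hB.gauge_mem _ (abs_nonneg _)).2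
      _ ≤ (1 + ‖z‖) ^ 1 := by rw [pow_one]; gcongr; exact abs_re_le_norm z
      _ ≤ C * Real.exp (‖z‖ / n) := hC _ (norm_nonneg z)
  calc ‖blockSum h κ z‖ ≤ sepSumBound * Q |z.re| * Real.exp (d * |z.im|) := hB.norm_blockSum_le z
    _ ≤ sepSumBound * (C * Real.exp (‖z‖ / n)) * Real.exp (d * |z.im|) := by gcongr
    _ = _ := by rw [expWeight_segment hd]; ring

lemma norm_block_add_le (hB : IsBlockSystem d Q h b κ r) {i j : ι} (hij : i ≠ j) (z : ℂ) :
    ‖h j (z + κ i - κ j)‖ ≤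
      (1 + ‖z‖) ^ 4 * Real.exp (d * |z.im|) / (1 + r i) * (1 / (1 + |κ i - κ j|) ^ 2) := by
  set D := |κ i - κ j|
  set W := ‖z + κ i - κ j‖
  have hri := hB.radius_nonneg i
  have hrj := hB.radius_nonneg j
  have hsep : r i + r j + 1 ≤ D := hB.separated hij
  have hb : b j * (1 + r i) ≤ (1 + D) ^ 2 := by
    have hbj : b j ≤ 1 + r j := (hB.le_gauge j _ le_rfl).trans (hB.gauge_mem _ hrj).2
    calc b j * (1 + r i) ≤ (1 + D) * (1 + D) := by gcongr <;> linarith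
      _ = (1 + D) ^ 2 := (sq _).symm
  have hDW : D ≤ ‖z‖ + W := by
    calc D = ‖((κ i - κ j : ℝ) : ℂ)‖ := by rw [norm_real, Real.norm_eq_abs]
      _ = ‖(z + κ i - κ j) - z‖ := by push_cast; congr 1; ring
      _ ≤ ‖z‖ + W := (norm_sub_le _ _).trans_eq (add_comm _ _)
  have hprod : 1 + D ≤ (1 + ‖z‖) * (1 + W) := by
    nlinarith [norm_nonneg z, norm_nonneg (z + κ i - κ j)]
  have hmain : b j / (1 + W) ^ 4 ≤ (1 + ‖z‖) ^ 4 / ((1 + r i) * (1 + D) ^ 2) := by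
    rw [div_le_div_iff₀ (by positivity) (by positivity)]
    calc b j * ((1 + r i) * (1 + D) ^ 2) = b j * (1 + r i) * (1 + D) ^ 2 := by ring
      _ ≤ (1 + D) ^ 2 * (1 + D) ^ 2 := by gcongr
      _ = (1 + D) ^ 4 := by ring
      _ ≤ ((1 + ‖z‖) * (1 + W)) ^ 4 := by gcongr
      _ = (1 + ‖z‖) ^ 4 * (1 + W) ^ 4 := mul_pow _ _ _
  calc ‖h j (z + κ i - κ j)‖ ≤ b j * Real.exp (d * |z.im|) / (1 + W) ^ 4 := by
        simpa using hB.decay j (z + κ i - κ j)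
    _ = b j / (1 + W) ^ 4 * Real.exp (d * |z.im|) := by ring
    _ ≤ (1 + ‖z‖) ^ 4 / ((1 + r i) * (1 + D) ^ 2) * Real.exp (d * |z.im|) := by gcongr
    _ = _ := by field_simp

lemma norm_blockSum_add_sub_le (hB : IsBlockSystem d Q h b κ r) (i : ι) (z : ℂ) :
    ‖blockSum h κ (z + κ i) - h i z‖ ≤
      sepSumBound / (1 + r i) * (1 + ‖z‖) ^ 4 * Real.exp (d * |z.im|) := by
  classical
  have hri := hB.radius_nonneg i
  have hsum : Summable fun j => h j (z + κ i - κ j) :=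
    .of_norm_bounded (hB.summable_majorant (z + κ i)) fun j => hB.norm_block_le j (z + κ i)
  have hsep := tsum_one_div_one_add_abs_sub_sq_le hB.pairwise_one_le (κ i)
  rw [blockSum, hsum.tsum_eq_add_tsum_ite i, add_sub_cancel_right, add_sub_cancel_left]
  refine (tsum_of_norm_bounded (hsep.1.mul_left
    ((1 + ‖z‖) ^ 4 * Real.exp (d * |z.im|) / (1 + r i))).hasSum fun j => ?_).trans ?_
  · split_ifs with hji
    · rw [norm_zero]; positivity
    · exact hB.norm_block_add_le (Ne.symm hji) z
  · rw [tsum_mul_left]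
    calc (1 + ‖z‖) ^ 4 * Real.exp (d * |z.im|) / (1 + r i) * ∑' j, 1 / (1 + |κ i - κ j|) ^ 2
        ≤ (1 + ‖z‖) ^ 4 * Real.exp (d * |z.im|) / (1 + r i) * sepSumBound := by
          gcongr; exact hsep.2
      _ = _ := by ring

lemma exists_forall_norm_blockSum_add_sub_le (hB : IsBlockSystem d Q h b κ r) (hd : 0 ≤ d)
    {n : ℕ} (hn : 0 < n) {ε : ℝ} (hε : 0 < ε) :
    ∃ r₀ : ℝ, ∀ i, r₀ ≤ r i → ∀ z, ‖blockSum h κ (z + κ i) - h i z‖ ≤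
      ε * expWeight (segment ℝ (-(d : ℂ) * I) ((d : ℂ) * I)) n z := by
  obtain ⟨C, _hC0, hC⟩ := exists_one_add_pow_le_mul_exp_div 4 (Nat.cast_pos.2 hn : (0 : ℝ) < n)
  have hS := sepSumBound_nonneg
  refine ⟨sepSumBound * C / ε, fun i hi z => (hB.norm_blockSum_add_sub_le i z).trans ?_⟩
  have hri := hB.radius_nonneg i
  have hsmall : sepSumBound / (1 + r i) * C ≤ ε := by
    rw [div_le_iff₀ hε] at hi
    rw [div_mul_eq_mul_div, div_le_iff₀ (by positivity)]
    linarith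
  calc sepSumBound / (1 + r i) * (1 + ‖z‖) ^ 4 * Real.exp (d * |z.im|)
      ≤ sepSumBound / (1 + r i) * (C * Real.exp (‖z‖ / n)) * Real.exp (d * |z.im|) := by
        gcongr; exact hC _ (norm_nonneg z)
    _ = sepSumBound / (1 + r i) * C
        * expWeight (segment ℝ (-(d : ℂ) * I) ((d : ℂ) * I)) n z := by
        rw [expWeight_segment hd]; ring
    _ ≤ _ := by gcongr; exact (expWeight_pos _ _ _).le

end IsBlockSystem

end Blocks

section Selection

variable {α : Type*}

lemma exists_seq_forall_frequently_eq {T : Set α} (hT : T.Countable) {P : α → ℕ → Prop}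
    (hP : ∀ a ∈ T, ∀ᶠ v in atTop, P a v) {a₀ : α} (h₀ : ∀ v, P a₀ v) :
    ∃ σ : ℕ → α, (∀ v, P (σ v) v) ∧ ∀ a ∈ T, ∃ᶠ v in atTop, σ v = a := by
  classical
  rcases T.eq_empty_or_nonempty with rfl | hne
  · exact ⟨fun _ => a₀, h₀, by simp⟩
  obtain ⟨e, rfl⟩ := hT.exists_eq_range hne
  refine ⟨fun v => if P (e v.unpair.1) v then e v.unpair.1 else a₀, fun v => ?_, ?_⟩
  · dsimp only
    split_ifs with hv
    exacts [hv, h₀ v]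
  · rintro _ ⟨i, rfl⟩
    obtain ⟨V, hV⟩ := eventually_atTop.1 (hP (e i) ⟨i, rfl⟩)
    refine frequently_atTop.2 fun N => ?_
    have hle : max N V ≤ i.pair (max N V) := Nat.right_le_pair _ _
    refine ⟨i.pair (max N V), (le_max_left _ _).trans hle, ?_⟩
    simp only [Nat.unpair_pair, if_pos (hV _ ((le_max_right _ _).trans hle))]

end Selection

section LowerDensity

variable {A : Set ℕ}

open scoped Classical in
lemma lowerDensity_pos_of_eventually_le {a : ℝ} (ha : 0 < a)
    (h : ∀ᶠ N : ℕ in atTop, a * N ≤ ((Finset.range (N + 1)).filter (· ∈ A)).card) :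
    0 < lowerDensity A := by
  refine ha.trans_le (le_liminf_of_le (IsBoundedUnder.isCoboundedUnder_ge ⟨2, ?_⟩) ?_)
  · rw [eventually_map]
    filter_upwards [eventually_ge_atTop 1] with N hN
    have hcard : ((Finset.range (N + 1)).filter (· ∈ A)).card ≤ 2 * N := by
      refine (Finset.card_filter_le _ _).trans ?_
      rw [Finset.card_range]
      omega
    rw [div_le_iff₀ (by exact_mod_cast hN)]
    exact_mod_cast hcard
  · filter_upwards [h, eventually_gt_atTop 0] with N hN hpos
    exact (le_div_iff₀ (by exact_mod_cast hpos)).2 hN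

open scoped Classical in
lemma lowerDensity_pos_of_injective {u : ℕ → ℕ} (hu : Function.Injective u) {M : ℕ} (hM : 0 < M)
    (huA : ∀ t, u t ∈ A) (hle : ∀ t, u t ≤ M * (t + 1)) : 0 < lowerDensity A := by
  have hcount (N : ℕ) : N / M ≤ ((Finset.range (N + 1)).filter (· ∈ A)).card := by
    rw [← Finset.card_range (N / M), ← Finset.card_image_of_injective _ hu]
    refine Finset.card_le_card (Finset.image_subset_iff.2 fun t ht => ?_)
    have huN : u t ≤ N := (hle t).trans <|
      (Nat.mul_le_mul_left M (Finset.mem_range.1 ht)).trans (Nat.mul_div_le N M)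
    simpa [huA t] using Nat.lt_succ_of_le huN
  have : (0 : ℝ) < M := by exact_mod_cast hM
  refine lowerDensity_pos_of_eventually_le (a := 1 / (2 * M)) (by positivity) ?_
  filter_upwards [eventually_ge_atTop (2 * M)] with N hN
  have hNr : (2 * M : ℝ) ≤ N := by exact_mod_cast hN
  have hdiv : (N : ℝ) < M * ((N / M : ℕ) + 1) := by exact_mod_cast Nat.lt_mul_div_succ N hM
  calc 1 / (2 * M) * (N : ℝ) ≤ (N / M : ℕ) := by
        rw [one_div_mul_eq_div, div_le_iff₀ (by positivity)]
        linarith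
    _ ≤ _ := by exact_mod_cast hcount N

end LowerDensity

section Ruler

/-- The ruler sequence `0, 1, 0, 2, 0, 1, 0, 3, …`, in which every value recurs with positive
density: the block placed `m`-th is the one of number `ruler m`. -/
def ruler (m : ℕ) : ℕ := padicValNat 2 (m + 1)

/-- The index of the `m`-th block's centre, chosen so that the intervals of radius `ruler m`
around these indices are pairwise disjoint. -/
def blockPos (m : ℕ) : ℕ := 2 * ∑ i ∈ Finset.range m, (ruler i + 1) + ruler m

lemma blockPos_add_ruler_add_ruler_lt {m m' : ℕ} (h : m < m') :
    blockPos m + ruler m + ruler m' < blockPos m' := by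
  have hsum : ∑ i ∈ Finset.range (m + 1), (ruler i + 1) ≤ ∑ i ∈ Finset.range m', (ruler i + 1) :=
    Finset.sum_le_sum_of_subset (Finset.range_mono h)
  rw [Finset.sum_range_succ] at hsum
  unfold blockPos
  omega

lemma blockPos_strictMono : StrictMono blockPos := fun m m' h => by
  have := blockPos_add_ruler_add_ruler_lt h
  omega

lemma ruler_le_self (m : ℕ) : ruler m ≤ m := by
  have hpow : 2 ^ ruler m ≤ m + 1 := Nat.le_of_dvd m.succ_pos pow_padicValNat_dvd
  exact Nat.lt_succ_iff.1 (Nat.lt_two_pow_self.trans_le hpow)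

lemma two_mul_ruler_le_blockPos (m : ℕ) : 2 * ruler m ≤ blockPos m := by
  have hsum : m ≤ ∑ i ∈ Finset.range m, (ruler i + 1) := by
    simp [Finset.sum_add_distrib]
  have := ruler_le_self m
  unfold blockPos
  omega

lemma sum_ruler (m : ℕ) : ∑ i ∈ Finset.range m, ruler i = padicValNat 2 m.factorial := by
  induction m with
  | zero => simp
  | succ m ih =>
    rw [Finset.sum_range_succ, ih, Nat.factorial_succ,
      padicValNat.mul (by omega) (Nat.factorial_ne_zero m), ruler, add_comm]

lemma blockPos_le (m : ℕ) : blockPos m ≤ 4 * (m + 1) := by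
  have hval : padicValNat 2 (m + 1).factorial ≤ m + 1 := by
    have legendre := sub_one_mul_padicValNat_factorial (p := 2) (m + 1)
    omega
  have hsum : ∑ i ∈ Finset.range (m + 1), (ruler i + 1) ≤ 2 * (m + 1) := by
    rw [Finset.sum_add_distrib, sum_ruler]
    simp only [Finset.sum_const, Finset.card_range, smul_eq_mul, mul_one]
    omega
  rw [Finset.sum_range_succ] at hsum
  unfold blockPos
  omega

lemma ruler_two_pow_mul_sub_one (v t : ℕ) : ruler (2 ^ v * (2 * t + 1) - 1) = v := by
  have hpos : 0 < 2 ^ v * (2 * t + 1) := by positivity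
  rw [ruler, Nat.sub_add_cancel hpos, padicValNat.mul (by positivity) (by omega),
    padicValNat.prime_pow, padicValNat.eq_zero_of_not_dvd (by omega), add_zero]

lemma lowerDensity_pos_of_ruler_eq {A : Set ℕ} {v : ℕ} (h : ∀ m, ruler m = v → blockPos m ∈ A) :
    0 < lowerDensity A := by
  have hpos (t : ℕ) : 0 < 2 ^ v * (2 * t + 1) := by positivity
  have hinj : Function.Injective fun t => 2 ^ v * (2 * t + 1) - 1 := fun t t' htt => by
    have := Nat.eq_of_mul_eq_mul_left (by positivity) (Nat.pred_inj (hpos t) (hpos t') htt)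
    omega
  refine lowerDensity_pos_of_injective (blockPos_strictMono.injective.comp hinj)
    (M := 8 * 2 ^ v) (by positivity) (fun t => h _ (ruler_two_pow_mul_sub_one v t)) fun t => ?_
  calc blockPos (2 ^ v * (2 * t + 1) - 1) ≤ 4 * (2 ^ v * (2 * t + 1)) := by
        simpa only [Nat.sub_add_cancel (hpos t)] using blockPos_le (2 ^ v * (2 * t + 1) - 1)
    _ ≤ 8 * 2 ^ v * (t + 1) := by nlinarith [Nat.two_pow_pos v]

end Ruler

lemma tendsto_min_atTop {α β : Type*} [LinearOrder β] {l : Filter α} {f g : α → β}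
    (hf : Tendsto f l atTop) (hg : Tendsto g l atTop) :
    Tendsto (fun x => min (f x) (g x)) l atTop :=
  tendsto_atTop.2 fun b => by
    filter_upwards [hf.eventually_ge_atTop b, hg.eventually_ge_atTop b] with x using le_min

section Placement

variable {k : ℕ → ℝ}

lemma natCast_sub_le_sub_of_add_one_le (hk : ∀ l, k l + 1 ≤ k (l + 1)) {l l' : ℕ} (h : l ≤ l') :
    (l' : ℝ) - l ≤ k l' - k l := by
  have hmono : Monotone fun l => k l - l := monotone_nat_of_le_succ fun l => by
    push_cast
    linarith [hk l]
  linarith [hmono h]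

lemma two_mul_ruler_le_apply_blockPos (hk0 : 0 ≤ k 0) (hk : ∀ l, k l + 1 ≤ k (l + 1)) (m : ℕ) :
    2 * (ruler m : ℝ) ≤ k (blockPos m) := by
  have hpos : 2 * (ruler m : ℝ) ≤ blockPos m := by exact_mod_cast two_mul_ruler_le_blockPos m
  have := natCast_sub_le_sub_of_add_one_le hk (blockPos m).zero_le
  rw [Nat.cast_zero] at this
  linarith

lemma pairwise_ruler_add_ruler_add_one_le (hk : ∀ l, k l + 1 ≤ k (l + 1)) :
    Pairwise fun m m' =>
      (ruler m : ℝ) + ruler m' + 1 ≤ |k (blockPos m) - k (blockPos m')| := by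
  have hlt {m m' : ℕ} (h : m < m') :
      (ruler m : ℝ) + ruler m' + 1 ≤ k (blockPos m') - k (blockPos m) := by
    have hsep : (blockPos m + ruler m + ruler m' + 1 : ℝ) ≤ blockPos m' := by
      exact_mod_cast blockPos_add_ruler_add_ruler_lt h
    linarith [natCast_sub_le_sub_of_add_one_le hk (blockPos_strictMono h).le]
  intro m m' hne
  rcases hne.lt_or_gt with h | h
  · rw [abs_sub_comm]
    exact (hlt h).trans (le_abs_self _)
  · rw [add_comm (ruler m : ℝ)]
    exact (hlt h).trans (le_abs_self _)

lemma exists_isBlockSystem_ruler {d : ℝ} {Q : ℝ → ℝ}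
    (hQ : ∀ t, 0 ≤ t → Q t ∈ Set.Icc 1 (1 + t)) (hQlim : Tendsto Q atTop atTop)
    {T : Set (ℂ → ℂ)} (hT : T.Countable)
    (hTd : ∀ h ∈ T, Differentiable ℂ h ∧ ∃ C, HasQuarticDecay d h C)
    (hk0 : 0 ≤ k 0) (hk : ∀ l, k l + 1 ≤ k (l + 1)) :
    ∃ (σ : ℕ → ℂ → ℂ) (b : ℕ → ℝ),
      IsBlockSystem d Q (fun m => σ (ruler m)) (fun m => b (ruler m))
        (fun m => k (blockPos m)) (fun m => ruler m) ∧
      ∀ h ∈ T, ∃ᶠ v in atTop, σ v = h := by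
  let P (h : ℂ → ℂ) (v : ℕ) : Prop :=
    Differentiable ℂ h ∧ ∃ b, HasQuarticDecay d h b ∧ ∀ t : ℝ, v ≤ t → b ≤ Q t
  have hPT : ∀ h ∈ T, ∀ᶠ v in atTop, P h v := fun h hh => by
    obtain ⟨hdiff, b, hb⟩ := hTd h hh
    filter_upwards [tendsto_natCast_atTop_atTop.eventually_forall_ge_atTop
      (hQlim.eventually_ge_atTop b)] with v hv
    exact ⟨hdiff, b, hb, hv⟩
  have hP0 : ∀ v, P 0 v := fun v => ⟨differentiable_const 0, 0, fun z => by simp, fun t ht =>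
    zero_le_one.trans (hQ t (v.cast_nonneg.trans ht)).1⟩
  obtain ⟨σ, hσ, hfreq⟩ := exists_seq_forall_frequently_eq hT hPT hP0
  choose hdiff b hdecay hgauge using hσ
  exact ⟨σ, b,
    { gauge_mem := hQ
      differentiable := fun m => hdiff _
      decay := fun m => hdecay _
      radius_nonneg := fun m => Nat.cast_nonneg _
      le_gauge := fun m => hgauge _
      two_mul_radius_le := two_mul_ruler_le_apply_blockPos hk0 hk
      separated := pairwise_ruler_add_ruler_add_one_le hk }, hfreq⟩

end Placement

theorem stmt3_general {q : ℝ → ℝ} (hq1 : ∀ r : ℝ, 0 ≤ r → 1 ≤ q r) (hq : Tendsto q atTop atTop)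
    {d : ℝ} (hd : 0 < d) {k : ℕ → ℝ} (hk0 : 0 ≤ k 0) (hk : ∀ l, k l + 1 ≤ k (l + 1)) :
    ∃ f : ℂ → ℂ,
      MemExp (segment ℝ (-(d : ℂ) * I) ((d : ℂ) * I)) f ∧
      (∃ C : ℝ, ∀ x : ℝ, ‖f x‖ ≤ C * q |x|) ∧
      ∀ g : ℂ → ℂ, MemExp (segment ℝ (-(d : ℂ) * I) ((d : ℂ) * I)) g →
        ∀ n : ℕ, 0 < n → ∀ ε > (0 : ℝ),
          0 < lowerDensity {l : ℕ |
            expNorm (segment ℝ (-(d : ℂ) * I) ((d : ℂ) * I)) n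
              (fun z => f (z + (k l : ℂ)) - g z) < ε} := by
  obtain ⟨T, hTcount, hTd, hTdense⟩ := exists_countable_hasQuarticDecay_dense hd
  obtain ⟨σ, b, hB, hfreq⟩ := exists_isBlockSystem_ruler (Q := fun t => min (q t) (1 + t))
    (fun t ht => ⟨le_min (hq1 t ht) (by linarith), min_le_right _ _⟩)
    (tendsto_min_atTop hq (tendsto_atTop_add_const_left _ 1 tendsto_id)) hTcount hTd hk0 hk
  refine ⟨_, hB.memExp_blockSum hd.le, ⟨sepSumBound, fun x => ?_⟩, fun g hg n hn ε hε => ?_⟩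
  · calc _ ≤ sepSumBound * min (q |x|) (1 + |x|) := by simpa using hB.norm_blockSum_le x
      _ ≤ sepSumBound * q |x| := mul_le_mul_of_nonneg_left (min_le_left _ _) sepSumBound_nonneg
  · obtain ⟨h, hT, hgh⟩ := hTdense g hg n hn (ε / 3) (by positivity)
    obtain ⟨r₀, hr₀⟩ := hB.exists_forall_norm_blockSum_add_sub_le hd.le hn (ε := ε / 3)
      (by positivity)
    obtain ⟨v, hσv, hv⟩ := ((hfreq h hT).and_eventually
      (tendsto_natCast_atTop_atTop.eventually_ge_atTop r₀)).exists
    refine lowerDensity_pos_of_ruler_eq (v := v) fun m hm => ?_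
    have hfh := hr₀ m (by rwa [hm])
    simp only [hm, hσv] at hfh
    refine (expNorm_le (C := 2 * ε / 3) fun z => ?_).trans_lt (by linarith)
    refine (norm_sub_le_norm_sub_add_norm_sub _ (h z) _).trans ?_
    rw [norm_sub_rev (h z)]
    linarith [hfh z, hgh z]

/-- **Theorem 5.** Given `q → ∞`, `d > 0` and an increasing sequence `(k l)` of positive
integers with `q(r) ≥ l ^ c` on the intervals `[(1−δ)k_l, (1+δ)k_l]` for some `c > 1`,
`δ > 0`, there is `f ∈ Exp([−id, id])` frequently universal for `(T₁^{k_l})` on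
`Exp([−id, id])` with `|f(x)| = O(q(|x|))` on the real axis. -/
theorem stmt3 (q : ℝ → ℝ) (hq1 : ∀ r : ℝ, 0 ≤ r → 1 ≤ q r)
    (hq : Tendsto q atTop atTop)
    (d : ℝ) (hd : 0 < d)
    (k : ℕ → ℕ) (hk : StrictMono k) (hkpos : ∀ l : ℕ, 0 < k l)
    (c δ : ℝ) (hc : 1 < c) (hδ : 0 < δ)
    (hql : ∀ l : ℕ, ∀ r : ℝ,
      (1 - δ) * (k l : ℝ) ≤ r → r ≤ (1 + δ) * (k l : ℝ) → (l : ℝ) ^ c ≤ q r) :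
    ∃ f : ℂ → ℂ,
      MemExp (segment ℝ (-(d : ℂ) * Complex.I) ((d : ℂ) * Complex.I)) f ∧
      (∃ C : ℝ, ∀ x : ℝ, ‖f (x : ℂ)‖ ≤ C * q |x|) ∧
      ∀ g : ℂ → ℂ, MemExp (segment ℝ (-(d : ℂ) * Complex.I) ((d : ℂ) * Complex.I)) g →
        ∀ n : ℕ, 0 < n → ∀ ε > (0 : ℝ),
          0 < lowerDensity {l : ℕ |
            expNorm (segment ℝ (-(d : ℂ) * Complex.I) ((d : ℂ) * Complex.I)) n
              (fun z => f (z + (k l : ℂ)) - g z) < ε} := by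
  simpa using stmt3_general hq1 hq hd (k := fun l => k l) (Nat.cast_nonneg _)
    fun l => by exact_mod_cast hk l.lt_succ_self
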